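/- arXiv:2601.10561 — 3 statements merged into one kernel-verified Lean document; each statement's English description precedes it below -/
import Mathlib

section
/- Let b be a nonzero integer, let p be an odd prime that is a 0-Pisano-Legendre prime relative to (0,b), and let q ≥ 1 be an integer. Then the star graph S_{qπ_p(0,b)+1} on qπ_p(0,b)+1 vertices is a (0,b)-Fibonacci-Legendre cordial graph modulo p. -/
/-!
Label the centre of the star by `0` and the leaves by `1, …, qπ`, where `π` is the Pisano period.
Since `F 0 = 0`, the edge to the leaf `i` gets label `1` if `F i` is a nonzero quadratic residue
modulo `p` and label `0` otherwise, so `e(1) - e(0)` is the sum over `1 ≤ i ≤ qπ` of the sign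
`flcSign i = ±1` recording which case occurs (`flcCount_star_sub`). This sign is periodic with
period `π`, so the sum is `q` times the sum over one period, and the latter is
`|Λ₁| - |Λ₋₁| - |Λ₀| = 0` by hypothesis (`sum_flcSign_pisano`).
-/

noncomputable section

/-- The `(a,b)`-Fibonacci sequence: `F 0 = a`, `F 1 = b`, `F (n+2) = F n + F (n+1)`. -/
def fibAB (a b : ℤ) : ℕ → ℤ
  | 0 => a
  | 1 => b
  | n + 2 => fibAB a b n + fibAB a b (n + 1)

/-- The `(a,b)`-Pisano period of `p`: the least positive `k` with
`F (n + k) ≡ F n (mod p)` for all `n`. -/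
def pisanoAB (a b : ℤ) (p : ℕ) : ℕ :=
  sInf {k : ℕ | 0 < k ∧ ∀ n : ℕ, fibAB a b (n + k) ≡ fibAB a b n [ZMOD (p : ℤ)]}

/-- `Λ_j^p(a,b)`: the indices `ξ ∈ {0, …, π_p(a,b) - 1}` with `(F_ξ / p) = j`,
where (for odd prime `p`) the Legendre symbol is given by `jacobiSym`. -/
def LambdaSet (a b : ℤ) (p : ℕ) (j : ℤ) : Finset ℕ :=
  (Finset.range (pisanoAB a b p)).filter fun ξ => jacobiSym (fibAB a b ξ) p = j

/-- `p` is a `k`-Pisano–Legendre prime relative to `(a,b)`. -/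
def IsPLPrime (a b : ℤ) (p : ℕ) (k : ℤ) : Prop :=
  k = ((LambdaSet a b p 1).card : ℤ) - ((LambdaSet a b p (-1)).card : ℤ)
      - ((LambdaSet a b p 0).card : ℤ)

/-- `χ(a,b)`: the set of integers `k` for which some odd prime is a `k`-PL prime
relative to `(a,b)`. -/
def chiSet (a b : ℤ) : Set ℤ :=
  {k | ∃ p : ℕ, p.Prime ∧ Odd p ∧ IsPLPrime a b p k}

/-- The order of apparition `z(p)` of `p` in the classical Fibonacci sequence. -/
def apparition (p : ℕ) : ℕ :=
  sInf {n : ℕ | 0 < n ∧ (p : ℤ) ∣ fibAB 0 1 n}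

/-- The induced edge label `f_p*` on an unordered pair of vertex labels. -/
def flcEdgeLabel (a b : ℤ) (p : ℕ) : Sym2 ℕ → ℕ :=
  Sym2.lift ⟨fun x y =>
    if (p : ℤ) ∣ (fibAB a b x + fibAB a b y) then 0
    else (1 + jacobiSym (fibAB a b x + fibAB a b y) p).toNat / 2,
    fun x y => by dsimp only; rw [add_comm (fibAB a b x) (fibAB a b y)]⟩

/-- The number of edges of `G` receiving label `i` under the vertex labeling `f`. -/
def flcCount {V : Type*} (G : SimpleGraph V) (a b : ℤ) (p : ℕ) (f : V → ℕ) (i : ℕ) : ℕ :=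
  {e ∈ G.edgeSet | flcEdgeLabel a b p (e.map f) = i}.ncard

/-- `G` is an `(a,b)`-Fibonacci–Legendre cordial graph modulo `p`: there is a bijective
vertex labeling by `{0, …, |V| - 1}` with `|e(0) - e(1)| ≤ 1`. -/
def IsFLCGraph {V : Type*} [Fintype V] (G : SimpleGraph V) (a b : ℤ) (p : ℕ) : Prop :=
  ∃ f : V ≃ Fin (Fintype.card V),
    |(flcCount G a b p (fun v => ((f v : Fin (Fintype.card V)) : ℕ)) 0 : ℤ) -
      (flcCount G a b p (fun v => ((f v : Fin (Fintype.card V)) : ℕ)) 1 : ℤ)| ≤ 1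

/-- The path graph on `n` vertices. -/
def pathG (n : ℕ) : SimpleGraph (Fin n) :=
  SimpleGraph.fromRel fun i j => (i : ℕ) + 1 = (j : ℕ)

/-- The cycle graph on `n` vertices: the path graph plus the edge between the
first and last vertex. -/
def cycleG (n : ℕ) : SimpleGraph (Fin n) :=
  SimpleGraph.fromRel fun i j => (i : ℕ) + 1 = (j : ℕ) ∨ ((i : ℕ) = 0 ∧ (j : ℕ) = n - 1)

/-- The star graph on `n` vertices with central vertex `0`. -/
def starG (n : ℕ) : SimpleGraph (Fin n) :=
  SimpleGraph.fromRel fun i _ => (i : ℕ) = 0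

/-- The wheel graph on `n` vertices: hub `0` joined to every vertex of the cycle on
`1, …, n-1`. -/
def wheelG (n : ℕ) : SimpleGraph (Fin n) :=
  SimpleGraph.fromRel fun i j =>
    (i : ℕ) = 0 ∨ (i : ℕ) + 1 = (j : ℕ) ∨ ((i : ℕ) = 1 ∧ (j : ℕ) = n - 1)

/-- Lexicographic product of graphs. -/
def lexProd {α β : Type*} (G : SimpleGraph α) (H : SimpleGraph β) : SimpleGraph (α × β) :=
  SimpleGraph.fromRel fun x y => G.Adj x.1 y.1 ∨ (x.1 = y.1 ∧ H.Adj x.2 y.2)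

/-- Cartesian product of graphs. -/
def cartProd {α β : Type*} (G : SimpleGraph α) (H : SimpleGraph β) : SimpleGraph (α × β) :=
  SimpleGraph.fromRel fun x y => (x.1 = y.1 ∧ H.Adj x.2 y.2) ∨ (x.2 = y.2 ∧ G.Adj x.1 y.1)

/-- Tensor product of graphs. -/
def tensorProd {α β : Type*} (G : SimpleGraph α) (H : SimpleGraph β) : SimpleGraph (α × β) :=
  SimpleGraph.fromRel fun x y => G.Adj x.1 y.1 ∧ H.Adj x.2 y.2

/-- Strong product of graphs: union of the cartesian and tensor products. -/
def strongProd {α β : Type*} (G : SimpleGraph α) (H : SimpleGraph β) : SimpleGraph (α × β) :=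
  cartProd G H ⊔ tensorProd G H

/-- Join of two graphs: both graphs together with all edges between them. -/
def joinG {α β : Type*} (G : SimpleGraph α) (H : SimpleGraph β) : SimpleGraph (α ⊕ β) :=
  SimpleGraph.fromRel fun x y =>
    match x, y with
    | Sum.inl u, Sum.inl v => G.Adj u v
    | Sum.inr u, Sum.inr v => H.Adj u v
    | Sum.inl _, Sum.inr _ => True
    | Sum.inr _, Sum.inl _ => True

/-- Corona `G ∘ H`: one copy of `G`, a copy of `H` for each vertex of `G`, and the
`u`-th vertex of `G` joined to every vertex of the `u`-th copy of `H`. -/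
def coronaG {α β : Type*} (G : SimpleGraph α) (H : SimpleGraph β) :
    SimpleGraph (α ⊕ α × β) :=
  SimpleGraph.fromRel fun x y =>
    match x, y with
    | Sum.inl u, Sum.inl v => G.Adj u v
    | Sum.inr (u, s), Sum.inr (v, t) => u = v ∧ H.Adj s t
    | Sum.inl u, Sum.inr (v, _) => u = v
    | Sum.inr (u, _), Sum.inl v => u = v

/-- Disjoint union of a family of graphs on a common vertex type. -/
def unionFam {ι V : Type*} (Gs : ι → SimpleGraph V) : SimpleGraph (ι × V) :=
  SimpleGraph.fromRel fun x y => x.1 = y.1 ∧ (Gs x.1).Adj x.2 y.2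

/-- The sign `+1` when `F i` is a nonzero quadratic residue modulo `p`, and `-1` otherwise. -/
def flcSign (b : ℤ) (p i : ℕ) : ℤ :=
  if jacobiSym (fibAB 0 b i) p = 1 then 1 else -1

/-- No nonemptiness of the set of periods is needed: if it were empty, `pisanoAB` would be `0`,
which is trivially a period. -/
lemma fibAB_add_pisanoAB (a b : ℤ) (p n : ℕ) :
    fibAB a b (n + pisanoAB a b p) ≡ fibAB a b n [ZMOD (p : ℤ)] := by
  rcases Set.eq_empty_or_nonempty
    {k : ℕ | 0 < k ∧ ∀ n : ℕ, fibAB a b (n + k) ≡ fibAB a b n [ZMOD (p : ℤ)]} with h | h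
  · have h0 : pisanoAB a b p = 0 := by
      unfold pisanoAB
      rw [h, Nat.sInf_empty]
    rw [h0]
    rfl
  · exact (Nat.sInf_mem h).2 n

lemma flcSign_periodic (b : ℤ) (p : ℕ) :
    Function.Periodic (flcSign b p) (pisanoAB 0 b p) := by
  intro n
  unfold flcSign
  rw [jacobiSym.mod_left' (fibAB_add_pisanoAB 0 b p n)]

lemma sum_flcSign_pisano (b : ℤ) (p : ℕ) :
    ∑ i ∈ Finset.range (pisanoAB 0 b p), flcSign b p i =
      ((LambdaSet 0 b p 1).card : ℤ) - ((LambdaSet 0 b p (-1)).card : ℤ)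
        - ((LambdaSet 0 b p 0).card : ℤ) := by
  unfold LambdaSet
  simp only [Finset.card_filter, Nat.cast_sum, ← Finset.sum_sub_distrib]
  refine Finset.sum_congr rfl fun i _ => ?_
  unfold flcSign
  rcases jacobiSym.trichotomy (fibAB 0 b i) p with h | h | h <;> simp [h]

lemma sum_range_mul_of_periodic {g : ℕ → ℤ} {c : ℕ} (hg : Function.Periodic g c) (q : ℕ) :
    ∑ i ∈ Finset.range (q * c), g i = q * ∑ i ∈ Finset.range c, g i := by
  induction q with
  | zero => simp
  | succ q ih =>
    rw [Nat.succ_mul, Finset.sum_range_add, ih]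
    have h : ∀ i, g (q * c + i) = g i := fun i => by
      rw [add_comm]
      exact hg.nat_mul q i
    simp only [h]
    push_cast
    ring

/-- Summing over `1, …, N` instead of `0, …, N - 1` is harmless when `g N = g 0`. -/
lemma sum_range_shift {g : ℕ → ℤ} {N : ℕ} (h : g N = g 0) :
    ∑ i ∈ Finset.range N, g (i + 1) = ∑ i ∈ Finset.range N, g i := by
  have h1 := Finset.sum_range_succ g N
  have h2 := Finset.sum_range_succ' g N
  linarith

lemma flcEdgeLabel_zero (b : ℤ) {p : ℕ} (hp : p.Prime) (i : ℕ) :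
    flcEdgeLabel 0 b p s(0, i) = if jacobiSym (fibAB 0 b i) p = 1 then 1 else 0 := by
  have := Fact.mk hp
  have h0 : fibAB 0 b 0 = 0 := rfl
  simp only [flcEdgeLabel, Sym2.lift_mk, h0, zero_add]
  by_cases hd : (p : ℤ) ∣ fibAB 0 b i
  · have hz : jacobiSym (fibAB 0 b i) p = 0 := by
      rw [← jacobiSym.legendreSym.to_jacobiSym, legendreSym.eq_zero_iff]
      exact (ZMod.intCast_zmod_eq_zero_iff_dvd _ _).2 hd
    simp [hd, hz]
  · rcases jacobiSym.trichotomy (fibAB 0 b i) p with h | h | h <;> simp [hd, h]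

/-- The edges of the star correspond to its leaves. -/
lemma starG_edgeSet (N : ℕ) :
    (starG (N + 1)).edgeSet = Set.range fun i : Fin N => s((0 : Fin (N + 1)), i.succ) := by
  ext e
  induction e using Sym2.ind with
  | _ x y =>
    simp only [SimpleGraph.mem_edgeSet, starG, SimpleGraph.fromRel_adj, Set.mem_range,
      Fin.val_eq_zero_iff]
    constructor
    · rintro ⟨hne, rfl | rfl⟩
      · obtain ⟨i, rfl⟩ := Fin.exists_succ_eq.2 hne.symm
        exact ⟨i, rfl⟩
      · obtain ⟨i, rfl⟩ := Fin.exists_succ_eq.2 hne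
        exact ⟨i, Sym2.eq_swap⟩
    · rintro ⟨i, hi⟩
      rcases Sym2.eq_iff.1 hi with ⟨rfl, rfl⟩ | ⟨rfl, rfl⟩
      · exact ⟨(Fin.succ_ne_zero i).symm, Or.inl rfl⟩
      · exact ⟨Fin.succ_ne_zero i, Or.inr rfl⟩

lemma flcCount_star (b : ℤ) (p N j : ℕ) :
    flcCount (starG (N + 1)) 0 b p (fun v => (v : ℕ)) j =
      ((Finset.range N).filter fun i => flcEdgeLabel 0 b p s(0, i + 1) = j).card := by
  have hinj : Function.Injective fun i : Fin N => s((0 : Fin (N + 1)), i.succ) := by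
    intro i k h
    rcases Sym2.eq_iff.1 h with ⟨_, h⟩ | ⟨h, _⟩
    · exact Fin.succ_injective _ h
    · exact absurd h.symm (Fin.succ_ne_zero k)
  have hset : {e ∈ (starG (N + 1)).edgeSet |
      flcEdgeLabel 0 b p (e.map fun v : Fin (N + 1) => (v : ℕ)) = j} =
      (fun i : Fin N => s((0 : Fin (N + 1)), i.succ)) ''
        {i : Fin N | flcEdgeLabel 0 b p s(0, (i : ℕ) + 1) = j} := by
    rw [starG_edgeSet]
    ext e
    constructor
    · rintro ⟨⟨i, rfl⟩, h⟩
      exact ⟨i, by simpa using h, rfl⟩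
    · rintro ⟨i, h, rfl⟩
      exact ⟨⟨i, rfl⟩, by simpa using h⟩
  unfold flcCount
  rw [hset, Set.ncard_image_of_injective _ hinj, Set.ncard_eq_toFinset_card']
  simp only [Finset.card_filter, Set.toFinset_ofPred]
  exact Fin.sum_univ_eq_sum_range
    (fun i => if flcEdgeLabel 0 b p s(0, i + 1) = j then 1 else 0) N

lemma flcCount_star_sub (b : ℤ) {p : ℕ} (hp : p.Prime) (N : ℕ) :
    (flcCount (starG (N + 1)) 0 b p (fun v => (v : ℕ)) 0 : ℤ) -
      (flcCount (starG (N + 1)) 0 b p (fun v => (v : ℕ)) 1 : ℤ) =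
      -∑ i ∈ Finset.range N, flcSign b p (i + 1) := by
  rw [flcCount_star, flcCount_star]
  simp only [Finset.card_filter, Nat.cast_sum, ← Finset.sum_sub_distrib, ← Finset.sum_neg_distrib]
  refine Finset.sum_congr rfl fun i _ => ?_
  rw [flcEdgeLabel_zero b hp]
  unfold flcSign
  split_ifs <;> simp_all

/-- For `b ≠ 0`, an odd prime `p` that is a `0`-PL prime relative to
`(0,b)`, and `q ≥ 1`, the star graph on `q·π_p(0,b) + 1` vertices is a `(0,b)`-FLC
graph modulo `p`. -/
theorem star_isFLCGraph (b : ℤ) (hb : b ≠ 0) (p : ℕ) (hp : p.Prime)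
    (hodd : Odd p) (hPL : IsPLPrime 0 b p 0) (q : ℕ) (hq : 1 ≤ q) :
    IsFLCGraph (starG (q * pisanoAB 0 b p + 1)) 0 b p := by
  have hper := flcSign_periodic b p
  have hend : flcSign b p (q * pisanoAB 0 b p) = flcSign b p 0 := by
    simpa using hper.nat_mul q 0
  have hsum : ∑ i ∈ Finset.range (q * pisanoAB 0 b p), flcSign b p (i + 1) = 0 := by
    rw [sum_range_shift hend, sum_range_mul_of_periodic hper, sum_flcSign_pisano, ← hPL, mul_zero]
  refine ⟨finCongr (Fintype.card_fin _).symm, ?_⟩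
  have h := flcCount_star_sub b hp (q * pisanoAB 0 b p)
  rw [hsum] at h
  simp only [finCongr_apply, Fin.val_cast]
  rw [h]
  simp
end
end

section
/- Let b be a nonzero integer, let k ≥ −1 be an integer, and let p be an odd prime that is a k-Pisano-Legendre prime relative to (0,b) with p ≡ ±1 (mod 8). Let H be a graph of order π_p(0,b)−1 and size m, and let G be a connected graph of order π_p(0,b)−1 and size (k+1)(m+π_p(0,b)−1)+ε, where ε ∈ {−1,0,1}. Then the corona graph G ∘ H is a (0,b)-Fibonacci-Legendre cordial graph modulo p. Moreover, in the special case m = 0, the conclusion holds without the hypothesis p ≡ ±1 (mod 8). -/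
/-!
Write `π = n + 1` for the Pisano period. The corona has `n + n² = n π` vertices, so every residue
class modulo `π` is used exactly `n` times as a label. Give the vertices of `G` the labels
divisible by `π`, and give all `n` vertices of the copy of `H` attached to the `i`-th vertex of `G`
(`0 ≤ i < n`) the labels congruent to `i + 1`. Modulo `p` the vertices of `G` then carry `F = 0`
and those of the `i`-th copy carry `F (i + 1)`.

Weigh an edge `+1` if it has label `1` and `-1` if it has label `0`. Every edge of `G` has weight
`-1`. The edges joining `G` to the `i`-th copy have the weight of `F (i + 1)`, and the edges inside
the copy have the weight of `2 F (i + 1)`, which is the same because `2` is a square modulo `p`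
when `p ≡ ±1 (mod 8)` (and there are no such edges when `m = 0`). The weights of
`F 1, …, F (π - 1)` sum to `k + 1`, as `F 0 = 0` accounts for a further `-1` in the definition of
`k`. Hence `e(1) - e(0) = (k + 1) (m + n) - |E(G)| = -ε`.
-/

noncomputable section

/-! ### Weights and edge labels -/

/-- The weight of a vertex-label sum `x`: `1` if `x` is a nonzero square modulo `p`, and `-1`
otherwise, so that an edge with label `1` counts `+1` and an edge with label `0` counts `-1`. -/
def symWeight (p : ℕ) (x : ℤ) : ℤ := if jacobiSym x p = 1 then 1 else -1

lemma jacobiSym_congr {p : ℕ} {x y : ℤ} (h : x ≡ y [ZMOD p]) : jacobiSym x p = jacobiSym y p := by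
  rw [jacobiSym.mod_left x, jacobiSym.mod_left y, h]

lemma symWeight_congr {p : ℕ} {x y : ℤ} (h : x ≡ y [ZMOD p]) : symWeight p x = symWeight p y := by
  simp only [symWeight, jacobiSym_congr h]

lemma jacobiSym_eq_zero_of_dvd {p : ℕ} (hp : p.Prime) {x : ℤ} (h : (p : ℤ) ∣ x) :
    jacobiSym x p = 0 := by
  rw [jacobiSym_congr ((Int.modEq_zero_iff_dvd).2 h)]
  exact jacobiSym.zero_left hp.one_lt

lemma flcEdgeLabel_mk (a b : ℤ) {p : ℕ} (hp : p.Prime) (x y : ℕ) :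
    flcEdgeLabel a b p s(x, y) = if jacobiSym (fibAB a b x + fibAB a b y) p = 1 then 1 else 0 := by
  simp only [flcEdgeLabel, Sym2.lift_mk]
  by_cases hd : (p : ℤ) ∣ fibAB a b x + fibAB a b y
  · simp [hd, jacobiSym_eq_zero_of_dvd hp hd]
  · rw [if_neg hd]
    rcases jacobiSym.trichotomy (fibAB a b x + fibAB a b y) p with h | h | h <;> simp [h]

lemma fibAB_add_period_mul {a b : ℤ} {p N : ℕ}
    (h : ∀ n : ℕ, fibAB a b (n + N) ≡ fibAB a b n [ZMOD (p : ℤ)]) (q r : ℕ) :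
    fibAB a b (q * N + r) ≡ fibAB a b r [ZMOD (p : ℤ)] := by
  induction q with
  | zero => simp
  | succ q ih =>
    have : (q + 1) * N + r = (q * N + r) + N := by ring
    rw [this]
    exact (h _).trans ih

/-! ### Counting edges by ordered pairs -/

open Classical in
/-- Each edge is counted by its two orientations. -/
lemma two_mul_ncard_edges {V : Type*} [Fintype V] (G : SimpleGraph V) (P : Sym2 V → Prop) :
    2 * ({e ∈ G.edgeSet | P e}.ncard : ℤ)
      = ∑ x : V, ∑ y : V, if G.Adj x y ∧ P s(x, y) then 1 else 0 := by
  let K : SimpleGraph V :=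
    { Adj := fun x y => G.Adj x y ∧ P s(x, y)
      symm := ⟨fun x y h => ⟨h.1.symm, by rw [Sym2.eq_swap]; exact h.2⟩⟩
      loopless := ⟨fun x h => G.loopless.irrefl x h.1⟩ }
  have hK : {e ∈ G.edgeSet | P e} = (K.edgeFinset : Set (Sym2 V)) := by
    ext e
    induction e using Sym2.ind with
    | _ x y => simp [K]
  have h := K.sum_degrees_eq_twice_card_edges
  rw [hK, Set.ncard_coe_finset]
  have h' : (2 * (K.edgeFinset.card : ℤ)) = ∑ v, (K.degree v : ℤ) := by exact_mod_cast h.symm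
  rw [h']
  refine Finset.sum_congr rfl fun x _ => ?_
  rw [Finset.sum_boole, SimpleGraph.degree, SimpleGraph.neighborFinset_eq_filter]

open Classical in
lemma two_mul_ncard_edgeSet {V : Type*} [Fintype V] (G : SimpleGraph V) :
    2 * (G.edgeSet.ncard : ℤ) = ∑ x : V, ∑ y : V, if G.Adj x y then 1 else 0 := by
  simpa using two_mul_ncard_edges G (fun _ => True)

open Classical in
lemma two_mul_flcCount_sub {V : Type*} [Fintype V] (G : SimpleGraph V) (a b : ℤ) {p : ℕ}
    (hp : p.Prime) (f : V → ℕ) :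
    2 * ((flcCount G a b p f 1 : ℤ) - (flcCount G a b p f 0 : ℤ))
      = ∑ x : V, ∑ y : V,
          if G.Adj x y then symWeight p (fibAB a b (f x) + fibAB a b (f y)) else 0 := by
  rw [mul_sub, flcCount, flcCount, two_mul_ncard_edges, two_mul_ncard_edges,
    ← Finset.sum_sub_distrib]
  refine Finset.sum_congr rfl fun x _ => ?_
  rw [← Finset.sum_sub_distrib]
  refine Finset.sum_congr rfl fun y _ => ?_
  rw [Sym2.map_mk, flcEdgeLabel_mk a b hp, symWeight]
  split_ifs <;> simp_all

/-! ### Edges of the corona -/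

section coronaAdj

variable {α β : Type*} (G : SimpleGraph α) (H : SimpleGraph β)

lemma coronaG_adj_inl_inl (u v : α) :
    (coronaG G H).Adj (Sum.inl u) (Sum.inl v) ↔ G.Adj u v := by
  simp only [coronaG, SimpleGraph.fromRel_adj, ne_eq, Sum.inl.injEq]
  exact ⟨fun h => h.2.elim id fun h => h.symm, fun h => ⟨h.ne, Or.inl h⟩⟩

lemma coronaG_adj_inl_inr (u : α) (v : α × β) :
    (coronaG G H).Adj (Sum.inl u) (Sum.inr v) ↔ u = v.1 := by
  simp [coronaG, SimpleGraph.fromRel_adj, eq_comm]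

lemma coronaG_adj_inr_inl (u : α × β) (v : α) :
    (coronaG G H).Adj (Sum.inr u) (Sum.inl v) ↔ u.1 = v := by
  simp [coronaG, SimpleGraph.fromRel_adj, eq_comm]

lemma coronaG_adj_inr_inr (u v : α × β) :
    (coronaG G H).Adj (Sum.inr u) (Sum.inr v) ↔ u.1 = v.1 ∧ H.Adj u.2 v.2 := by
  obtain ⟨u, s⟩ := u
  obtain ⟨v, t⟩ := v
  simp only [coronaG, SimpleGraph.fromRel_adj, ne_eq, Sum.inr.injEq, Prod.mk.injEq]
  refine ⟨fun h => h.2.elim id fun h => ⟨h.1.symm, h.2.symm⟩, fun h => ⟨fun e => ?_, Or.inl h⟩⟩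
  exact h.2.ne e.2

end coronaAdj

open Classical in
/-- The value of `e(1) - e(0)` for a labeling under which the vertices of `G` carry `0` modulo `p`
and all vertices of the copy of `H` at `u` carry the same residue `c u`. If `H` has an edge, then
doubling must preserve the weight, since an edge of the copy at `u` has label sum `2 c u`. -/
lemma flcCount_coronaG_sub {U W : Type*} [Fintype U] [Fintype W] (G : SimpleGraph U)
    (H : SimpleGraph W) (a b : ℤ) {p : ℕ} (hp : p.Prime) (f : U ⊕ U × W → ℕ) (c : U → ℤ)
    (hl : ∀ u, fibAB a b (f (Sum.inl u)) ≡ 0 [ZMOD p])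
    (hr : ∀ u s, fibAB a b (f (Sum.inr (u, s))) ≡ c u [ZMOD p])
    (htwo : ∀ s t, H.Adj s t → ∀ x : ℤ, symWeight p (x + x) = symWeight p x) :
    ((flcCount (coronaG G H) a b p f 1 : ℤ) - (flcCount (coronaG G H) a b p f 0 : ℤ))
      = (H.edgeSet.ncard + Fintype.card W) * ∑ u, symWeight p (c u) - G.edgeSet.ncard := by
  have hzero : symWeight p 0 = -1 := by
    simp [symWeight, jacobiSym.zero_left hp.one_lt]
  have hll : ∀ u v, symWeight p (fibAB a b (f (Sum.inl u)) + fibAB a b (f (Sum.inl v))) = -1 := by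
    intro u v
    rw [symWeight_congr ((hl u).add (hl v)), add_zero, hzero]
  have hlr : ∀ u v s, symWeight p (fibAB a b (f (Sum.inl u)) + fibAB a b (f (Sum.inr (v, s))))
      = symWeight p (c v) := by
    intro u v s
    rw [symWeight_congr ((hl u).add (hr v s)), zero_add]
  have hrl : ∀ u v s, symWeight p (fibAB a b (f (Sum.inr (v, s))) + fibAB a b (f (Sum.inl u)))
      = symWeight p (c v) := by
    intro u v s
    rw [add_comm, hlr]
  have hrr : ∀ u v s t,
      (if u = v ∧ H.Adj s t then
        symWeight p (fibAB a b (f (Sum.inr (u, s))) + fibAB a b (f (Sum.inr (v, t)))) else 0)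
      = if u = v then symWeight p (c u) * (if H.Adj s t then 1 else 0) else 0 := by
    intro u v s t
    by_cases huv : u = v
    · subst huv
      by_cases hst : H.Adj s t
      · simp [hst, symWeight_congr ((hr u s).add (hr u t)), htwo s t hst]
      · simp [hst]
    · simp [huv]
  have h := two_mul_flcCount_sub (coronaG G H) a b hp f
  have hGG : (∑ u : U, ∑ v : U, if G.Adj u v then (-1 : ℤ) else 0) = -(2 * G.edgeSet.ncard) := by
    rw [two_mul_ncard_edgeSet, ← Finset.sum_neg_distrib]
    refine Finset.sum_congr rfl fun u _ => ?_
    rw [← Finset.sum_neg_distrib]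
    refine Finset.sum_congr rfl fun v _ => ?_
    split_ifs <;> simp
  have hGH : (∑ u : U, ∑ v : U, ∑ _s : W, if u = v then symWeight p (c v) else 0)
      = Fintype.card W * ∑ u, symWeight p (c u) := by
    rw [Finset.mul_sum]
    refine Finset.sum_congr rfl fun u _ => ?_
    simp [Finset.sum_const]
  have hHG : (∑ v : U, ∑ _s : W, ∑ u : U, if v = u then symWeight p (c v) else 0)
      = Fintype.card W * ∑ u, symWeight p (c u) := by
    rw [Finset.mul_sum]
    refine Finset.sum_congr rfl fun u _ => ?_
    simp [Finset.sum_const]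
  have hHH : (∑ u : U, ∑ s : W, ∑ v : U, ∑ t : W,
      if u = v then symWeight p (c u) * (if H.Adj s t then 1 else 0) else 0)
      = 2 * H.edgeSet.ncard * ∑ u, symWeight p (c u) := by
    rw [two_mul_ncard_edgeSet, Finset.mul_sum]
    refine Finset.sum_congr rfl fun u _ => ?_
    rw [Finset.sum_mul]
    refine Finset.sum_congr rfl fun s _ => ?_
    rw [Finset.sum_comm, Finset.sum_mul]
    refine Finset.sum_congr rfl fun t _ => ?_
    simp [mul_comm]
  simp only [Fintype.sum_sum_type, Fintype.sum_prod_type, coronaG_adj_inl_inl,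
    coronaG_adj_inl_inr, coronaG_adj_inr_inl, coronaG_adj_inr_inr, hll, hlr, hrl, hrr,
    Finset.sum_add_distrib, hGG, hGH, hHG, hHH] at h
  linarith

/-! ### The Pisano–Legendre hypothesis -/

/-- The defining difference of a `k`-PL prime is the total weight over one period. -/
lemma IsPLPrime.sum_symWeight {a b : ℤ} {p : ℕ} {k : ℤ} (h : IsPLPrime a b p k) :
    ∑ i ∈ Finset.range (pisanoAB a b p), symWeight p (fibAB a b i) = k := by
  rw [h, LambdaSet, LambdaSet, LambdaSet, Finset.natCast_card_filter, Finset.natCast_card_filter,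
    Finset.natCast_card_filter, ← Finset.sum_sub_distrib, ← Finset.sum_sub_distrib]
  refine Finset.sum_congr rfl fun i _ => ?_
  rw [symWeight]
  rcases jacobiSym.trichotomy (fibAB a b i) p with h | h | h <;> simp [h]

lemma symWeight_add_self {p : ℕ} (hp : p.Prime) (hodd : Odd p) (h8 : p % 8 = 1 ∨ p % 8 = 7)
    (x : ℤ) : symWeight p (x + x) = symWeight p x := by
  have := Fact.mk hp
  have h2 : jacobiSym 2 p = 1 := by
    rw [jacobiSym.at_two hodd, ZMod.χ₈_nat_eq_if_mod_eight]
    have : p % 2 ≠ 0 := by omega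
    simp [this, h8]
  rw [symWeight, ← two_mul, jacobiSym.mul_left, h2, one_mul, symWeight]

/-- For `b ≠ 0`, `k ≥ -1`, an odd prime `p` that is a `k`-PL prime
relative to `(0,b)`, a graph `H` of order `π_p(0,b) - 1` and size `m`, and a connected
graph `G` of order `π_p(0,b) - 1` and size `(k+1)(m + π_p(0,b) - 1) + ε` with
`ε ∈ {-1,0,1}`, the corona `G ∘ H` is a `(0,b)`-FLC graph modulo `p`, provided
`p ≡ ±1 (mod 8)`; when `m = 0` this last condition is not required. -/
theorem corona_isFLCGraph (b : ℤ) (hb : b ≠ 0) (k : ℤ) (hk : -1 ≤ k) (p : ℕ)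
    (hp : p.Prime) (hodd : Odd p) (hPL : IsPLPrime 0 b p k) (m : ℕ)
    (h8 : m = 0 ∨ p % 8 = 1 ∨ p % 8 = 7)
    {W : Type} [Fintype W] (hW : Fintype.card W = pisanoAB 0 b p - 1)
    (H : SimpleGraph W) (hH : H.edgeSet.ncard = m)
    {U : Type} [Fintype U] (hU : Fintype.card U = pisanoAB 0 b p - 1)
    (G : SimpleGraph U) (hG : G.Connected) (ε : ℤ) (hε : ε = -1 ∨ ε = 0 ∨ ε = 1)
    (hsize : (G.edgeSet.ncard : ℤ) =
      (k + 1) * ((m : ℤ) + (pisanoAB 0 b p : ℤ) - 1) + ε) :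
    IsFLCGraph (coronaG G H) 0 b p := by
  have hUne : 0 < Fintype.card U := Fintype.card_pos_iff.2 hG.nonempty
  obtain ⟨n, hn⟩ : ∃ n, pisanoAB 0 b p = n + 1 := ⟨pisanoAB 0 b p - 1, by omega⟩
  -- The period is positive, so the infimum defining it is not the junk value of the empty set.
  have hper : ∀ i : ℕ, fibAB 0 b (i + (n + 1)) ≡ fibAB 0 b i [ZMOD (p : ℤ)] := by
    have hne : {k : ℕ | 0 < k ∧
        ∀ n : ℕ, fibAB 0 b (n + k) ≡ fibAB 0 b n [ZMOD (p : ℤ)]}.Nonempty := by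
      refine Nat.nonempty_of_pos_sInf ?_
      change 0 < pisanoAB 0 b p
      omega
    have := (Nat.sInf_mem hne).2
    change ∀ i : ℕ, fibAB 0 b (i + pisanoAB 0 b p) ≡ fibAB 0 b i [ZMOD (p : ℤ)] at this
    rwa [hn] at this
  have hsum := hPL.sum_symWeight
  rw [hn] at hU hW hsize hsum
  simp only [Nat.add_sub_cancel] at hU hW
  let eU : U ≃ Fin n := Fintype.equivFinOfCardEq hU
  let eW : W ≃ Fin n := Fintype.equivFinOfCardEq hW
  let g : U ⊕ U × W → ℕ := Sum.elim (fun u => (eU u : ℕ) * (n + 1) + 0)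
    (fun x => (eW x.2 : ℕ) * (n + 1) + ((eU x.1 : ℕ) + 1))
  have hcard : Fintype.card (U ⊕ U × W) = n * (n + 1) := by
    simp [hU, hW]; ring
  have hbound : ∀ q r : ℕ, q < n → r < n + 1 → q * (n + 1) + r < n * (n + 1) := by
    intro q r hq hr
    nlinarith
  have hlt : ∀ x, g x < Fintype.card (U ⊕ U × W) := by
    rw [hcard]
    rintro (u | ⟨u, s⟩)
    · exact hbound _ _ (eU u).2 (by omega)
    · exact hbound _ _ (eW s).2 (by have := (eU u).2; simp only; omega)
  have hdiv : ∀ q r q' r' : ℕ, r < n + 1 → r' < n + 1 →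
      q * (n + 1) + r = q' * (n + 1) + r' → q = q' ∧ r = r' := by
    intro q r q' r' hr hr' h
    have h1 := congrArg (· % (n + 1)) h
    simp only [Nat.mul_add_mod_self_right, Nat.mod_eq_of_lt hr,
      Nat.mod_eq_of_lt hr'] at h1
    subst h1
    exact ⟨Nat.eq_of_mul_eq_mul_right (Nat.succ_pos n) (Nat.add_right_cancel h), rfl⟩
  have hinj : Function.Injective g := by
    rintro (u | ⟨u, s⟩) (v | ⟨v, t⟩) h
    · have := hdiv _ _ _ _ (by omega) (by omega) h
      exact congrArg Sum.inl (eU.injective (Fin.ext this.1))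
    · have := hdiv _ _ _ _ (by omega) (by have := (eU v).2; simp only; omega) h
      simp at this
    · have := hdiv _ _ _ _ (by have := (eU u).2; simp only; omega) (by omega) h
      simp at this
    · have := hdiv _ _ _ _ (by have := (eU u).2; simp only; omega)
        (by have := (eU v).2; simp only; omega) h
      have hs : s = t := eW.injective (Fin.ext this.1)
      have hu : u = v := eU.injective (Fin.ext (Nat.succ_injective this.2))
      rw [hs, hu]
  let f' : U ⊕ U × W → Fin (Fintype.card (U ⊕ U × W)) := fun x => ⟨g x, hlt x⟩
  have hbij : Function.Bijective f' := by
    rw [Fintype.bijective_iff_injective_and_card]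
    exact ⟨fun x y h => hinj (congrArg Fin.val h), by simp⟩
  refine ⟨Equiv.ofBijective f' hbij, ?_⟩
  change |(flcCount (coronaG G H) 0 b p g 0 : ℤ) - (flcCount (coronaG G H) 0 b p g 1 : ℤ)| ≤ 1
  have hmain := flcCount_coronaG_sub G H 0 b hp g (fun u => fibAB 0 b ((eU u : ℕ) + 1))
    (fun u => fibAB_add_period_mul hper _ 0) (fun u s => fibAB_add_period_mul hper _ _) (by
      intro s t hst x
      rcases h8 with h0 | h8
      · have hempty : H.edgeSet = ∅ := by
          rw [← Set.ncard_eq_zero (Set.toFinite _), hH, h0]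
        exact absurd (H.mem_edgeSet.2 hst) (by simp [hempty])
      · exact symWeight_add_self hp hodd h8 x)
  have hsumU : ∑ u : U, symWeight p (fibAB 0 b ((eU u : ℕ) + 1)) = k + 1 := by
    rw [Equiv.sum_comp eU (fun i : Fin n => symWeight p (fibAB 0 b ((i : ℕ) + 1))),
      Fin.sum_univ_eq_sum_range (fun i => symWeight p (fibAB 0 b (i + 1)))]
    rw [Finset.sum_range_succ'] at hsum
    have hzero : symWeight p (fibAB 0 b 0) = -1 := by
      simp [fibAB, symWeight, jacobiSym.zero_left hp.one_lt]
    linarith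
  rw [hsumU, hsize, hH, hW] at hmain
  push_cast at hmain
  have hε' : (flcCount (coronaG G H) 0 b p g 0 : ℤ) - (flcCount (coronaG G H) 0 b p g 1 : ℤ)
      = ε := by linarith
  rw [hε']
  rcases hε with h | h | h <;> simp [h]
end
end

section
/- Let p be an odd prime such that the order of apparition z(p) of p is odd, and let k be an integer. Then p is a k-Pisano-Legendre prime relative to (0,1) if and only if |Λ₋₁^p(0,1)| = (π_p(0,1) − k)/2 − 4. -/
/-!
Every index in one period has Legendre symbol `1`, `-1` or `0`, so the claim amounts to
`|Λ₀| = 4`. Put `z = z(p)` and `a = F_{z+1}` modulo `p`. Since `F_z = 0`, the recurrence gives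
`F_{n+z} = a F_n`, and Cassini's identity with `z` odd gives `a² = -1`, so `a` has order `4`.
Hence the zeros modulo `p` are exactly the multiples of `z`, and the period is `4z`; the zeros
in a period are `0, z, 2z, 3z`.
-/

noncomputable section

/-- The classical Fibonacci sequence reduced modulo `p`. -/
def fibMod (p n : ℕ) : ZMod p := ((fibAB 0 1 n : ℤ) : ZMod p)

lemma fibMod_zero (p : ℕ) : fibMod p 0 = 0 := by simp [fibMod, fibAB]

lemma fibMod_one (p : ℕ) : fibMod p 1 = 1 := by simp [fibMod, fibAB]

lemma fibMod_add_two (p n : ℕ) : fibMod p (n + 2) = fibMod p n + fibMod p (n + 1) := by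
  simp [fibMod, fibAB]

/-- Cassini's identity, in a form involving only two consecutive terms. -/
lemma fibMod_cassini (p n : ℕ) :
    fibMod p (n + 1) ^ 2 - fibMod p (n + 1) * fibMod p n - fibMod p n ^ 2 = (-1) ^ n := by
  induction n with
  | zero => simp [fibMod_zero, fibMod_one]
  | succ n ih =>
    rw [fibMod_add_two, pow_succ (-1 : ZMod p), ← ih]
    ring

lemma fibMod_add_of_zero {p z : ℕ} (h : fibMod p z = 0) (n : ℕ) :
    fibMod p (n + z) = fibMod p (z + 1) * fibMod p n := by
  induction n using Nat.twoStepInduction with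
  | zero => simp [fibMod_zero, h]
  | one => simp [fibMod_one, add_comm]
  | more n h1 h2 =>
    rw [show n + 2 + z = n + z + 2 by ring, fibMod_add_two, fibMod_add_two, h1,
      show n + z + 1 = n + 1 + z by ring, h2]
    ring

lemma fibMod_add_mul_of_zero {p z : ℕ} (h : fibMod p z = 0) (n m : ℕ) :
    fibMod p (n + m * z) = fibMod p (z + 1) ^ m * fibMod p n := by
  induction m with
  | zero => simp
  | succ m ih =>
    rw [show n + (m + 1) * z = n + m * z + z by ring, fibMod_add_of_zero h, ih]
    ring

lemma apparition_spec {p : ℕ} (hz : Odd (apparition p)) :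
    fibMod p (apparition p) = 0 := by
  -- An odd value is nonzero, hence not the junk infimum of the empty set.
  have hmem := Nat.sInf_mem (Nat.nonempty_of_pos_sInf hz.pos)
  exact (ZMod.intCast_zmod_eq_zero_iff_dvd _ _).2 hmem.2

lemma fibMod_apparition_succ_sq {p : ℕ} (hz : Odd (apparition p)) :
    fibMod p (apparition p + 1) ^ 2 = -1 := by
  have h := fibMod_cassini p (apparition p)
  rw [apparition_spec hz, hz.neg_one_pow] at h
  simpa using h

lemma fibMod_eq_zero_iff {p : ℕ} (hp : p.Prime) (hz : Odd (apparition p)) (n : ℕ) :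
    fibMod p n = 0 ↔ apparition p ∣ n := by
  have : Fact p.Prime := ⟨hp⟩
  have h0 := apparition_spec hz
  have hsq := fibMod_apparition_succ_sq hz
  have ha : fibMod p (apparition p + 1) ≠ 0 := by
    intro h
    rw [h] at hsq
    simp at hsq
  constructor
  · intro hn
    rw [← Nat.mod_add_div' n (apparition p), fibMod_add_mul_of_zero h0] at hn
    have hr := (mul_eq_zero.1 hn).resolve_left (pow_ne_zero _ ha)
    rw [Nat.dvd_iff_mod_eq_zero]
    by_contra hne
    exact Nat.notMem_of_lt_sInf (Nat.mod_lt n hz.pos)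
      ⟨Nat.pos_of_ne_zero hne, (ZMod.intCast_zmod_eq_zero_iff_dvd _ _).1 hr⟩
  · rintro ⟨m, rfl⟩
    have h := fibMod_add_mul_of_zero h0 0 m
    rw [fibMod_zero, mul_zero, zero_add, mul_comm] at h
    exact h

lemma pisanoAB_eq_four_mul {p : ℕ} (hp : p.Prime) (hodd : Odd p) (hz : Odd (apparition p)) :
    pisanoAB 0 1 p = 4 * apparition p := by
  have : Fact p.Prime := ⟨hp⟩
  have : Fact (2 < p) := ⟨by
    have := hp.two_le
    rcases hodd with ⟨m, rfl⟩
    omega⟩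
  have h0 := apparition_spec hz
  have hsq := fibMod_apparition_succ_sq hz
  have hord : orderOf (fibMod p (apparition p + 1)) = 4 := by
    refine orderOf_eq_prime_pow (p := 2) (n := 1) ?_ ?_
    · rw [pow_one, hsq]
      exact ZMod.neg_one_ne_one
    · rw [show 2 ^ (1 + 1) = 2 * 2 by norm_num, pow_mul, hsq]
      norm_num
  apply IsLeast.csInf_eq
  constructor
  · refine ⟨by have := hz.pos; omega, fun n => ?_⟩
    rw [← ZMod.intCast_eq_intCast_iff]
    change fibMod p (n + 4 * apparition p) = fibMod p n
    rw [fibMod_add_mul_of_zero h0, ← hord, pow_orderOf_eq_one, one_mul]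
  · rintro k ⟨hk, hper⟩
    have hper' : ∀ n, fibMod p (n + k) = fibMod p n := fun n =>
      (ZMod.intCast_eq_intCast_iff _ _ _).2 (hper n)
    have hk0 : fibMod p k = 0 := by simpa [fibMod_zero] using hper' 0
    obtain ⟨m, rfl⟩ := (fibMod_eq_zero_iff hp hz k).1 hk0
    have hm := hper' 1
    rw [mul_comm (apparition p) m, fibMod_add_mul_of_zero h0, fibMod_one, mul_one] at hm
    have hdvd := orderOf_dvd_of_pow_eq_one hm
    rw [hord] at hdvd
    have h4 : 4 ≤ m := Nat.le_of_dvd (Nat.pos_of_mul_pos_left hk) hdvd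
    rw [mul_comm]
    exact Nat.mul_le_mul_left _ h4

lemma card_LambdaSet_zero {p : ℕ} (hp : p.Prime) (hodd : Odd p) (hz : Odd (apparition p)) :
    (LambdaSet 0 1 p 0).card = 4 := by
  have : Fact p.Prime := ⟨hp⟩
  have himage : LambdaSet 0 1 p 0 = (Finset.range 4).image (fun m => apparition p * m) := by
    ext n
    have hJ : jacobiSym (fibAB 0 1 n) p = 0 ↔ apparition p ∣ n := by
      rw [← jacobiSym.legendreSym.to_jacobiSym, legendreSym.eq_zero_iff]
      exact fibMod_eq_zero_iff hp hz n
    simp only [LambdaSet, Finset.mem_filter, Finset.mem_range, Finset.mem_image, hJ,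
      pisanoAB_eq_four_mul hp hodd hz]
    constructor
    · rintro ⟨hlt, m, rfl⟩
      rw [mul_comm] at hlt
      exact ⟨m, Nat.lt_of_mul_lt_mul_right hlt, rfl⟩
    · rintro ⟨m, hm, rfl⟩
      refine ⟨?_, dvd_mul_right _ _⟩
      rw [mul_comm]
      exact Nat.mul_lt_mul_of_pos_right hm hz.pos
  rw [himage, Finset.card_image_of_injective _ (mul_right_injective₀ hz.pos.ne'),
    Finset.card_range]

lemma card_LambdaSet_add (p : ℕ) :
    (LambdaSet 0 1 p 1).card + (LambdaSet 0 1 p (-1)).card + (LambdaSet 0 1 p 0).card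
      = pisanoAB 0 1 p := by
  simp only [LambdaSet, Finset.card_filter]
  rw [← Finset.sum_add_distrib, ← Finset.sum_add_distrib]
  trans ∑ _n ∈ Finset.range (pisanoAB 0 1 p), 1
  · refine Finset.sum_congr rfl fun n _ => ?_
    rcases jacobiSym.trichotomy (fibAB 0 1 n) p with h | h | h <;> rw [h] <;> norm_num
  · simp

/-- If the order of apparition `z(p)` of an odd prime `p` is odd,
then `p` is a `k`-PL prime relative to `(0,1)` iff
`|Λ₋₁^p(0,1)| = (π_p(0,1) - k)/2 - 4`, i.e. `2·|Λ₋₁^p(0,1)| = π_p(0,1) - k - 8`. -/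
theorem isPLPrime_iff_of_odd_apparition (p : ℕ) (hp : p.Prime) (hodd : Odd p)
    (hz : Odd (apparition p)) (k : ℤ) :
    IsPLPrime 0 1 p k ↔
      2 * ((LambdaSet 0 1 p (-1)).card : ℤ) = (pisanoAB 0 1 p : ℤ) - k - 8 := by
  have h0 := card_LambdaSet_zero hp hodd hz
  have hsum := card_LambdaSet_add p
  unfold IsPLPrime
  omega
end
end
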